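/- Let v be a radial weight satisfying M₁(v) = sup_{0<r<1} (∫_r¹ v̂(s)/(1-s)² ds)^{1/2} (∫₀^r 1/v̂(s) ds)^{1/2} < ∞. Then there exists C = C(v) > 0 such that for every function f analytic on the unit disc 𝔻, ∫₀¹ M_∞(s,f)² · v̂(s)/(1-s)² ds ≤ C · M₁(v)² · ‖f‖²_{D_v}. -/

import Mathlib

open MeasureTheory Real Set Filter

noncomputable section

/-- `hatw v r = ∫_r^1 v(s) ds`. -/
def hatw (v : ℝ → ℝ) (r : ℝ) : ℝ := ∫ s in r..1, v s

/-- A radial weight: measurable, positive on `[0,1)`, integrable on `(0,1)`. -/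
def RadialWeight (v : ℝ → ℝ) : Prop :=
  Measurable v ∧ (∀ r ∈ Set.Ico (0:ℝ) 1, 0 < v r) ∧
    MeasureTheory.IntegrableOn v (Set.Ioo 0 1)

/-- Membership in the class `D̂`. -/
def DoublingD (v : ℝ → ℝ) : Prop :=
  ∃ C : ℝ, 1 ≤ C ∧ ∀ r ∈ Set.Ico (0:ℝ) 1, hatw v r ≤ C * hatw v ((1+r)/2)

/-- Squared Dirichlet-type norm `‖f‖_{D_v}^2`. -/
def DvSq (v : ℝ → ℝ) (f : ℂ → ℂ) : ENNReal :=
  (‖f 0‖₊ : ENNReal)^2 +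
    (ENNReal.ofReal Real.pi)⁻¹ *
      ∫⁻ z in Metric.ball (0:ℂ) 1, (‖deriv f z‖₊ : ENNReal)^2 * ENNReal.ofReal (v ‖z‖)

/-- The Muckenhoupt type quantity `M₁(v)`. -/
def M1v (v : ℝ → ℝ) : ENNReal :=
  ⨆ r ∈ Set.Ioo (0:ℝ) 1,
    (∫⁻ s in Set.Ioo r 1, ENNReal.ofReal (hatw v s / (1-s)^2)) ^ (1/2 : ℝ) *
    (∫⁻ s in Set.Ioo (0:ℝ) r, ENNReal.ofReal (1 / hatw v s)) ^ (1/2 : ℝ)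

/-- The Muckenhoupt type quantity `M₂(v)`. -/
def M2v (v : ℝ → ℝ) : ENNReal :=
  ⨆ r ∈ Set.Ioo (0:ℝ) 1,
    (∫⁻ s in Set.Ioo (0:ℝ) r, ENNReal.ofReal (hatw v s / (1-s)^4)) ^ (1/2 : ℝ) *
    (∫⁻ s in Set.Ioo r 1, ENNReal.ofReal ((1-s)^2 / hatw v s)) ^ (1/2 : ℝ)

/-- The moment `v_x = ∫_0^1 s^x v(s) ds`. -/
def vx (v : ℝ → ℝ) (x : ℕ) : ℝ := ∫ s in (0:ℝ)..1, s^x * v s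

/-- `M_∞(s,f)`, the maximum of `|f|` on the circle of radius `s`. -/
def Minf (f : ℂ → ℂ) (s : ℝ) : ℝ := sSup ((fun z => ‖f z‖) '' Metric.sphere (0:ℂ) s)

/-- `M₂(r,h)`. -/
def M2mean (h : ℂ → ℂ) (r : ℝ) : ℝ :=
  Real.sqrt ((2*Real.pi)⁻¹ * ∫ θ in (-Real.pi)..Real.pi, ‖h ((r:ℂ) * Complex.exp (θ * Complex.I))‖^2)

/-- The norm of `B(2,∞)` (with values in `[0,∞]`). -/
def B2infE (g : ℂ → ℂ) : ENNReal :=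
  (‖g 0‖₊ : ENNReal) +
    ⨆ r ∈ Set.Ioo (0:ℝ) 1, ENNReal.ofReal (M2mean (deriv g) r * Real.sqrt (1-r))

/-- The `p`-th power of the norm of `B(2,p)` (with values in `[0,∞]`). -/
def B2pE (p : ℝ) (g : ℂ → ℂ) : ENNReal :=
  ENNReal.ofReal (‖g 0‖ ^ p) +
    ∫⁻ r in Set.Ioo (0:ℝ) 1, ENNReal.ofReal (M2mean (deriv g) r ^ p * (1-r)^(p/2-1))

/-- The generalized Hilbert operator `H_g`. -/
def Hg (g f : ℂ → ℂ) (z : ℂ) : ℂ := ∫ t in Set.Ioo (0:ℝ) 1, f t * deriv g (t * z)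

/-- The Hilbert operator `H` acting on functions on `[0,1)`. -/
def Hop (φ : ℝ → ℂ) (z : ℂ) : ℂ := ∫ t in Set.Ioo (0:ℝ) 1, φ t / (1 - t * z)

/-- The sublinear Hilbert operator `H̃`. -/
def Htil (φ : ℝ → ℂ) (z : ℂ) : ℂ := ∫ t in Set.Ioo (0:ℝ) 1, (‖φ t‖ : ℂ) / (1 - t * z)

/-- Squared norm in `L²_{V̂₂}`. -/
def L2V2sq (v : ℝ → ℝ) (φ : ℝ → ℂ) : ENNReal :=
  ∫⁻ t in Set.Ioo (0:ℝ) 1, (‖φ t‖₊ : ENNReal)^2 * ENNReal.ofReal (hatw v t / (1-t)^2)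

/-- Taylor coefficient `ĝ(k)` of `g` at the origin. -/
def gcoef (g : ℂ → ℂ) (k : ℕ) : ℂ := iteratedDeriv k g 0 / (Nat.factorial k)



lemma kernel_row (a : ℝ) (ha : 1 ≤ a) (m : ℕ) :
    √a / (√((m:ℝ)+1) * (m + a)) ≤
      8 * (√((m+1:ℕ):ℝ) / (√((m+1:ℕ):ℝ) + √a) - √(m:ℝ) / (√(m:ℝ) + √a)) := by
  push_cast
  have hm : (0:ℝ) ≤ m := Nat.cast_nonneg m
  obtain ⟨x, hx⟩ : ∃ x, x = √(m:ℝ) := ⟨_, rfl⟩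
  obtain ⟨y, hy⟩ : ∃ y, y = √((m:ℝ)+1) := ⟨_, rfl⟩
  obtain ⟨s, hs⟩ : ∃ s, s = √a := ⟨_, rfl⟩
  have x0 : 0 ≤ x := hx ▸ Real.sqrt_nonneg _
  have x2 : x ^ 2 = m := by rw [hx, Real.sq_sqrt hm]
  have y2 : y ^ 2 = m + 1 := by rw [hy, Real.sq_sqrt (by positivity)]
  have s2 : s ^ 2 = a := by rw [hs, Real.sq_sqrt (by positivity)]
  have y0 : 0 < y := hy ▸ Real.sqrt_pos.2 (by positivity)
  have s0 : 0 < s := hs ▸ Real.sqrt_pos.2 (by positivity)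
  have xy : x ≤ y := by nlinarith
  rw [← hx, ← hy, ← hs]
  have e : y / (y + s) - x / (x + s) = s * (y - x) / ((y + s) * (x + s)) := by
    field_simp; ring
  rw [e, ← mul_div_assoc, div_le_div_iff₀ (by positivity) (by positivity)]
  have h1 : (y + s) * (x + s) ≤ 4 * (m + a) := by
    have : (y + s) * (x + s) ≤ (y + s) * (y + s) := by gcongr
    nlinarith [sq_nonneg (y - s)]
  have h2 : 1 ≤ 2 * ((y - x) * y) := by nlinarith
  have : (y + s) * (x + s) * 1 ≤ 4 * (m + a) * (2 * ((y - x) * y)) := by gcongr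
  calc s * ((y + s) * (x + s)) = s * ((y + s) * (x + s) * 1) := by ring
    _ ≤ s * (4 * (m + a) * (2 * ((y - x) * y))) := by gcongr
    _ = _ := by ring

lemma kernel_tsum (n : ℕ) :
    ∑' m : ℕ, ENNReal.ofReal (√((n:ℝ)+1) / (√((m:ℝ)+1) * (m + ((n:ℝ)+1)))) ≤ 8 := by
  refine ENNReal.tsum_le_of_sum_range_le fun N => ?_
  rw [← ENNReal.ofReal_sum_of_nonneg (fun i _ => by positivity)]
  rw [show (8:ENNReal) = ENNReal.ofReal 8 by simp]
  apply ENNReal.ofReal_le_ofReal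
  calc _ ≤ ∑ m ∈ Finset.range N, 8 * (√((m+1:ℕ):ℝ) / (√((m+1:ℕ):ℝ) + √((n:ℝ)+1)) - √(m:ℝ) / (√(m:ℝ) + √((n:ℝ)+1))) :=
        Finset.sum_le_sum fun m _ => kernel_row _ (by simp) m
    _ = 8 * (√(N:ℝ) / (√(N:ℝ) + √((n:ℝ)+1))) := by
        rw [← Finset.mul_sum, Finset.sum_range_sub (fun m : ℕ => √(m:ℝ) / (√(m:ℝ) + √((n:ℝ)+1)))]
        simp
    _ ≤ 8 := by
        have : √(N:ℝ) / (√(N:ℝ) + √((n:ℝ)+1)) ≤ 1 := by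
          apply div_le_one_of_le₀ <;> [skip; positivity]
          have := Real.sqrt_nonneg ((n:ℝ)+1)
          linarith
        linarith

lemma ennreal_two_mul_le (a b : ENNReal) : 2 * (a * b) ≤ a ^ 2 + b ^ 2 := by
  rcases eq_or_ne a ⊤ with rfl | ha
  · simp
  rcases eq_or_ne b ⊤ with rfl | hb
  · simp
  lift a to NNReal using ha
  lift b to NNReal using hb
  norm_cast
  rw [← mul_assoc]
  exact two_mul_le_add_sq a b

lemma hilbert_ineq (b : ℕ → ENNReal) :
    ∑' n, ∑' m, b n * b m * ENNReal.ofReal (1 / ((m:ℝ) + ((n:ℝ) + 1))) ≤ 8 * ∑' n, b n ^ 2 := by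
  let K : ℕ → ℕ → ENNReal := fun n m =>
    ENNReal.ofReal (√((n:ℝ)+1) / (√((m:ℝ)+1) * (m + ((n:ℝ)+1))))
  have key : ∀ n m, 2 * (b n * b m * ENNReal.ofReal (1 / ((m:ℝ) + ((n:ℝ) + 1)))) ≤
      b n ^ 2 * K n m + b m ^ 2 * K m n := by
    intro n m
    obtain ⟨p, hp⟩ : ∃ p, p = √(√((n:ℝ)+1) / (√((m:ℝ)+1) * (m + ((n:ℝ)+1)))) := ⟨_, rfl⟩
    obtain ⟨q, hq⟩ : ∃ q, q = √(√((m:ℝ)+1) / (√((n:ℝ)+1) * (n + ((m:ℝ)+1)))) := ⟨_, rfl⟩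
    have hp0 : 0 ≤ p := hp ▸ Real.sqrt_nonneg _
    have hq0 : 0 ≤ q := hq ▸ Real.sqrt_nonneg _
    have hK1 : K n m = ENNReal.ofReal p ^ 2 := by
      rw [← ENNReal.ofReal_pow hp0, hp, Real.sq_sqrt (by positivity)]
    have hK2 : K m n = ENNReal.ofReal q ^ 2 := by
      rw [← ENNReal.ofReal_pow hq0, hq, Real.sq_sqrt (by positivity)]
    have hpq : 1 / ((m:ℝ) + ((n:ℝ) + 1)) = p * q := by
      have h1 : 0 < √((n:ℝ)+1) := Real.sqrt_pos.2 (by positivity)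
      have h2 : 0 < √((m:ℝ)+1) := Real.sqrt_pos.2 (by positivity)
      rw [hp, hq, ← Real.sqrt_mul (by positivity)]
      symm
      rw [Real.sqrt_eq_iff_mul_self_eq (by positivity) (by positivity)]
      rw [show (n:ℝ) + ((m:ℝ)+1) = (m:ℝ) + ((n:ℝ) + 1) by ring]
      field_simp
    rw [hK1, hK2, hpq, ENNReal.ofReal_mul hp0, ← mul_pow, ← mul_pow]
    refine le_trans (le_of_eq ?_) (ennreal_two_mul_le _ _)
    ring
  have h1 : ∑' n, ∑' m, b n ^ 2 * K n m ≤ 8 * ∑' n, b n ^ 2 := by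
    rw [← ENNReal.tsum_mul_left]
    refine ENNReal.tsum_le_tsum fun n => ?_
    rw [ENNReal.tsum_mul_left, mul_comm]
    gcongr
    exact kernel_tsum n
  have h2 : ∑' n, ∑' m, b m ^ 2 * K m n ≤ 8 * ∑' n, b n ^ 2 := by
    rw [ENNReal.tsum_comm]; exact h1
  have h3 : 2 * ∑' n, ∑' m, b n * b m * ENNReal.ofReal (1 / ((m:ℝ) + ((n:ℝ) + 1))) ≤
      2 * (8 * ∑' n, b n ^ 2) := by
    calc _ = ∑' n, ∑' m, 2 * (b n * b m * ENNReal.ofReal (1 / ((m:ℝ) + ((n:ℝ) + 1)))) := by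
          simp_rw [ENNReal.tsum_mul_left]
      _ ≤ ∑' n, ∑' m, (b n ^ 2 * K n m + b m ^ 2 * K m n) :=
          ENNReal.tsum_le_tsum fun n => ENNReal.tsum_le_tsum fun m => key n m
      _ = ∑' n, ∑' m, b n ^ 2 * K n m + ∑' n, ∑' m, b m ^ 2 * K m n := by
          simp_rw [ENNReal.tsum_add]
      _ ≤ _ := by rw [two_mul]; gcongr
  exact (ENNReal.mul_le_mul_iff_right (by simp) (by simp)).1 h3

lemma lintegral_pow_Ioo (r : ℝ) (hr : 0 ≤ r) (k : ℕ) :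
    ∫⁻ t in Ioo 0 r, ENNReal.ofReal (t ^ k) = ENNReal.ofReal (r ^ (k+1) / (k + 1)) := by
  rw [← ofReal_integral_eq_lintegral_ofReal]
  · rw [← integral_Ioc_eq_integral_Ioo, ← intervalIntegral.integral_of_le hr, integral_pow]
    simp
  · exact (((continuous_pow k).integrableOn_Icc (μ := volume) (a := 0) (b := r)).mono_set Ioo_subset_Icc_self)
  · filter_upwards [ae_restrict_mem measurableSet_Ioo] with t ht
    exact pow_nonneg ht.1.le k

lemma fejer_riesz (b : ℕ → ENNReal) (r : ℝ) (hr : 0 ≤ r) :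
    ∫⁻ t in Ioo 0 r, (∑' n, b n * ENNReal.ofReal (t ^ n)) ^ 2 ≤
      8 * (ENNReal.ofReal r * ∑' n, (b n * ENNReal.ofReal (r ^ n)) ^ 2) := by
  have e : ∀ t ∈ Ioo 0 r, (∑' n, b n * ENNReal.ofReal (t ^ n)) ^ 2 =
      ∑' n, ∑' m, b n * b m * ENNReal.ofReal (t ^ (n + m)) := by
    intro t ht
    rw [sq, ← ENNReal.tsum_mul_right]
    refine tsum_congr fun n => ?_
    rw [← ENNReal.tsum_mul_left]
    refine tsum_congr fun m => ?_
    rw [pow_add, ENNReal.ofReal_mul (pow_nonneg ht.1.le n)]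
    ring
  rw [setLIntegral_congr_fun measurableSet_Ioo e, lintegral_tsum (by fun_prop)]
  have e2 : ∀ n, ∫⁻ t in Ioo 0 r, ∑' m, b n * b m * ENNReal.ofReal (t ^ (n + m)) =
      ∑' m, (b n * ENNReal.ofReal (r ^ n)) * (b m * ENNReal.ofReal (r ^ m)) * ENNReal.ofReal (1 / ((m:ℝ) + ((n:ℝ) + 1))) * ENNReal.ofReal r := by
    intro n
    rw [lintegral_tsum (by fun_prop)]
    refine tsum_congr fun m => ?_
    rw [lintegral_const_mul _ (by fun_prop), lintegral_pow_Ioo r hr]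
    rw [show r ^ (n + m + 1) / (((n + m : ℕ):ℝ) + 1) = r ^ n * r ^ m * (1 / ((m:ℝ) + ((n:ℝ) + 1))) * r by
      push_cast; rw [show (n:ℝ) + m + 1 = m + (n + 1) by ring]; ring]
    rw [ENNReal.ofReal_mul (by positivity), ENNReal.ofReal_mul (by positivity), ENNReal.ofReal_mul (by positivity)]
    ring
  simp_rw [e2, ENNReal.tsum_mul_right]
  rw [mul_comm (ENNReal.ofReal r), ← mul_assoc]
  gcongr
  exact hilbert_ineq _

lemma fourierCoeffOn_circle (g : ℂ → ℂ) (hg : DifferentiableOn ℂ g (Metric.ball 0 1))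
    (r : ℝ) (hr : r ∈ Ioo (0:ℝ) 1) (n : ℕ) :
    fourierCoeffOn (a := 0) (b := 2 * π) (by positivity) (fun θ => g (circleMap 0 r θ)) n =
      gcoef g n * (r:ℂ) ^ n := by
  have h := DifferentiableOn.circleIntegral_one_div_sub_center_pow_smul (f := g) (c := 0) hr.1 n
    (hg.mono (Metric.closedBall_subset_ball hr.2))
  have hr0 : (r:ℂ) ≠ 0 := by exact_mod_cast hr.1.ne'
  rw [fourierCoeffOn_eq_integral]
  have hpi : (2 * π * Complex.I : ℂ) ≠ 0 := Complex.two_pi_I_ne_zero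
  have e : gcoef g n = (2 * π * Complex.I : ℂ)⁻¹ * ∮ z in C(0, r), (1 / (z - 0) ^ (n + 1)) • g z := by
    rw [h, gcoef, smul_eq_mul]
    field_simp
  rw [e, circleIntegral]
  have e3 : ∀ θ : ℝ, deriv (circleMap 0 r) θ • (1 / (circleMap 0 r θ - 0) ^ (n + 1)) • g (circleMap 0 r θ)
      = (Complex.I * ((r:ℂ) ^ n)⁻¹) * (fourier (-(n:ℤ)) (θ : AddCircle (2 * π - 0)) • g (circleMap 0 r θ)) := by
    intro θ
    rw [fourier_coe_apply, deriv_circleMap]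
    simp only [smul_eq_mul, sub_zero, circleMap_zero]
    have : Complex.exp (2 * π * Complex.I * ((-(n:ℤ) : ℤ):ℂ) * θ / ((2 * π : ℝ) : ℂ)) =
        (Complex.exp (θ * Complex.I) ^ n)⁻¹ := by
      rw [← Complex.exp_nat_mul, ← Complex.exp_neg]
      congr 1
      have : (π : ℂ) ≠ 0 := by exact_mod_cast Real.pi_ne_zero
      push_cast
      field_simp
    rw [this]
    have := Complex.exp_ne_zero (θ * Complex.I)
    field_simp
    ring
  simp_rw [e3]
  rw [intervalIntegral.integral_const_mul]
  have : (π : ℂ) ≠ 0 := by exact_mod_cast Real.pi_ne_zero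
  rw [Complex.real_smul]
  push_cast
  rw [sub_zero]
  generalize (∫ x in (0:ℝ)..2 * π, (fourier (-(n:ℤ)) (x : AddCircle (2 * π - 0)) • g (circleMap 0 r x))) = J
  have hI := Complex.I_ne_zero
  field_simp

lemma bessel_circle (g : ℂ → ℂ) (hg : DifferentiableOn ℂ g (Metric.ball 0 1))
    (r : ℝ) (hr : r ∈ Ioo (0:ℝ) 1) :
    ∑' n, ((‖gcoef g n‖₊ : ENNReal) * ENNReal.ofReal (r ^ n)) ^ 2 ≤
      (ENNReal.ofReal (2 * π))⁻¹ * ∫⁻ θ in Ioo (-π) π, (‖g (circleMap 0 r θ)‖₊ : ENNReal) ^ 2 := by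
  have hcont : Continuous (fun θ => g (circleMap 0 r θ)) := by
    refine hg.continuousOn.comp_continuous (continuous_circleMap 0 r) fun θ => ?_
    simp [abs_of_pos hr.1, hr.2]
  have hab : (0:ℝ) < 2 * π := by positivity
  have hL2 : MemLp (fun θ => g (circleMap 0 r θ)) 2 (volume.restrict (Ioc 0 (2 * π))) := by
    refine MemLp.mono_measure (Measure.restrict_mono Ioc_subset_Icc_self le_rfl) ?_
    obtain ⟨M, hM⟩ := isCompact_Icc.exists_bound_of_continuousOn (hcont.continuousOn (s := Icc 0 (2 * π)))
    exact MemLp.of_bound hcont.aestronglyMeasurable M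
      ((ae_restrict_mem measurableSet_Icc).mono fun x hx => hM x hx)
  have hs := hasSum_sq_fourierCoeffOn hab hL2
  have hI : ∫⁻ θ in Ioo (-π) π, (‖g (circleMap 0 r θ)‖₊ : ENNReal) ^ 2 =
      ENNReal.ofReal (∫ x in (0:ℝ)..2 * π, ‖g (circleMap 0 r x)‖ ^ 2) := by
    have hper : Function.Periodic (fun x => ‖g (circleMap 0 r x)‖ ^ 2) (2 * π) := by
      intro x; simp only [periodic_circleMap 0 r x]
    have := hper.intervalIntegral_add_eq 0 (-π)
    rw [zero_add, show -π + 2 * π = π by ring] at this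
    rw [this, intervalIntegral.integral_of_le (by linarith [Real.pi_pos]),
      integral_Ioc_eq_integral_Ioo, ofReal_integral_eq_lintegral_ofReal]
    · refine lintegral_congr fun θ => ?_
      rw [ENNReal.ofReal_pow (norm_nonneg _), ofReal_norm]; rfl
    · exact ((hcont.norm.pow 2).integrableOn_Icc).mono_set Ioo_subset_Icc_self
    · exact ae_of_all _ fun x => by positivity
  rw [hI, ← ENNReal.ofReal_inv_of_pos hab, ← ENNReal.ofReal_mul (by positivity)]
  rw [sub_zero, smul_eq_mul] at hs
  refine ENNReal.tsum_le_of_sum_range_le fun N => ?_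
  have e : ∀ n, ((‖gcoef g n‖₊ : ENNReal) * ENNReal.ofReal (r ^ n)) ^ 2 =
      ENNReal.ofReal (‖fourierCoeffOn hab (fun θ => g (circleMap 0 r θ)) (n:ℤ)‖ ^ 2) := by
    intro n
    rw [fourierCoeffOn_circle g hg r hr n, ENNReal.ofReal_pow (norm_nonneg _), norm_mul,
      ENNReal.ofReal_mul (norm_nonneg _), ofReal_norm, norm_pow, Complex.norm_real,
      Real.norm_of_nonneg hr.1.le]
    rfl
  simp_rw [e]
  rw [← ENNReal.ofReal_sum_of_nonneg (fun i _ => by positivity)]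
  apply ENNReal.ofReal_le_ofReal
  have hmap := Finset.sum_map (Finset.range N) (Nat.castEmbedding (R := ℤ)) (fun i : ℤ => ‖fourierCoeffOn hab (fun θ => g (circleMap 0 r θ)) i‖ ^ 2)
  refine hmap.symm.trans_le ?_
  exact sum_le_hasSum _ (fun i _ => by positivity) hs

lemma Minf_le (f : ℂ → ℂ) (hf : DifferentiableOn ℂ f (Metric.ball 0 1))
    (s : ℝ) (hs : s ∈ Ioo (0:ℝ) 1) :
    ENNReal.ofReal (Minf f s) ≤ (‖f 0‖₊ : ENNReal) +
      ∫⁻ t in Ioo 0 s, ∑' n, (‖gcoef (deriv f) n‖₊ : ENNReal) * ENNReal.ofReal (t ^ n) := by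
  rw [lintegral_tsum (by fun_prop)]
  have e : ∀ n : ℕ, ∫⁻ t in Ioo 0 s, (‖gcoef (deriv f) n‖₊ : ENNReal) * ENNReal.ofReal (t ^ n) =
      ENNReal.ofReal (‖gcoef f (n+1)‖ * s ^ (n+1)) := by
    intro n
    rw [lintegral_const_mul _ (by fun_prop), lintegral_pow_Ioo s hs.1.le]
    have : gcoef (deriv f) n = (n + 1) * gcoef f (n+1) := by
      rw [gcoef, gcoef, iteratedDeriv_succ', Nat.factorial_succ]
      have : ((n:ℂ) + 1) ≠ 0 := by exact_mod_cast Nat.succ_ne_zero n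
      push_cast
      field_simp
    rw [this, ← enorm_eq_nnnorm, ← ofReal_norm, ← ENNReal.ofReal_mul (norm_nonneg _), norm_mul]
    congr 1
    have : ‖(n:ℂ) + 1‖ = n + 1 := by exact_mod_cast Complex.norm_natCast (n+1)
    rw [this]; field_simp
  simp_rw [e]
  by_cases htop : ∑' n : ℕ, ENNReal.ofReal (‖gcoef f (n+1)‖ * s ^ (n+1)) = ⊤
  · rw [htop]; simp
  have hsum : Summable fun n : ℕ => ‖gcoef f (n+1)‖ * s ^ (n+1) := by
    have := ENNReal.summable_toReal htop
    refine this.congr fun n => ENNReal.toReal_ofReal ?_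
    exact mul_nonneg (norm_nonneg _) (pow_nonneg hs.1.le _)
  rw [← ENNReal.ofReal_tsum_of_nonneg (fun n => mul_nonneg (norm_nonneg _) (pow_nonneg hs.1.le _)) hsum,
    ← enorm_eq_nnnorm, ← ofReal_norm, ← ENNReal.ofReal_add (norm_nonneg _)
      (tsum_nonneg fun n => mul_nonneg (norm_nonneg _) (pow_nonneg hs.1.le _))]
  apply ENNReal.ofReal_le_ofReal
  apply csSup_le
  · exact ((NormedSpace.sphere_nonempty (E := ℂ)).2 hs.1.le).image _
  rintro _ ⟨z, hz, rfl⟩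
  have hz' : ‖z‖ = s := by simpa using hz
  have hzb : z ∈ Metric.ball (0:ℂ) 1 := by simp [hz', hs.2]
  have ht := Complex.hasSum_taylorSeries_on_ball hf hzb
  have ht2 : HasSum (fun n => gcoef f n * z ^ n) (f z) := by
    have hfun : (fun n => gcoef f n * z ^ n) =
        fun n : ℕ ↦ (n.factorial : ℂ)⁻¹ • (z - 0) ^ n • iteratedDeriv n f 0 := by
      funext n
      rw [gcoef, sub_zero, smul_eq_mul, smul_eq_mul]; ring
    rw [hfun]; exact ht
  rw [← hasSum_nat_add_iff' 1] at ht2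
  have hn : ∀ n, ‖gcoef f (n+1) * z ^ (n+1)‖ = ‖gcoef f (n+1)‖ * s ^ (n+1) := by
    intro n; rw [norm_mul, norm_pow, hz']
  have h0 : ∑ i ∈ Finset.range 1, gcoef f i * z ^ i = f 0 := by simp [gcoef]
  rw [h0] at ht2
  have := norm_tsum_le_tsum_norm (f := fun n => gcoef f (n+1) * z ^ (n+1)) (by simpa only [hn] using hsum)
  rw [ht2.tsum_eq] at this
  simp_rw [hn] at this
  calc ‖f z‖ = ‖f 0 + (f z - f 0)‖ := by ring_nf
    _ ≤ ‖f 0‖ + ‖f z - f 0‖ := norm_add_le _ _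
    _ ≤ _ := by gcongr

lemma tonelli_triangle (a b : ℝ → ENNReal) (ha : AEMeasurable a (volume.restrict (Ioo (0:ℝ) 1)))
    (hb : AEMeasurable b (volume.restrict (Ioo (0:ℝ) 1))) :
    ∫⁻ s in Ioo (0:ℝ) 1, a s * ∫⁻ t in Ioo 0 s, b t =
      ∫⁻ t in Ioo (0:ℝ) 1, b t * ∫⁻ s in Ioo t 1, a s := by
  have h1 : ∀ s ∈ Ioo (0:ℝ) 1, a s * ∫⁻ t in Ioo 0 s, b t =
      ∫⁻ t in Ioo (0:ℝ) 1, {p : ℝ × ℝ | p.2 < p.1}.indicator (fun p => a p.1 * b p.2) (s, t) := by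
    intro s hs
    have e1 : ∫⁻ t in Ioo 0 s, b t = ∫⁻ t in Ioo (0:ℝ) 1, (Iio s).indicator b t := by
      rw [lintegral_indicator measurableSet_Iio, Measure.restrict_restrict measurableSet_Iio]
      congr 2
      ext x; simp only [mem_inter_iff, mem_Ioo, mem_Iio]
      constructor
      · rintro ⟨h1, h2⟩; exact ⟨h2, h1, h2.trans hs.2⟩
      · rintro ⟨h1, h2, h3⟩; exact ⟨h2, h1⟩
    rw [e1, ← lintegral_const_mul'' _ (hb.indicator measurableSet_Iio)]
    refine lintegral_congr fun t => ?_
    by_cases h : t < s <;> simp [indicator, h]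
  have h2 : ∀ t ∈ Ioo (0:ℝ) 1, b t * ∫⁻ s in Ioo t 1, a s =
      ∫⁻ s in Ioo (0:ℝ) 1, {p : ℝ × ℝ | p.2 < p.1}.indicator (fun p => a p.1 * b p.2) (s, t) := by
    intro t ht
    have e1 : ∫⁻ s in Ioo t 1, a s = ∫⁻ s in Ioo (0:ℝ) 1, (Ioi t).indicator a s := by
      rw [lintegral_indicator measurableSet_Ioi, Measure.restrict_restrict measurableSet_Ioi]
      congr 2
      ext x; simp only [mem_inter_iff, mem_Ioo, mem_Ioi]
      constructor
      · rintro ⟨h1, h2⟩; exact ⟨h1, ht.1.trans h1, h2⟩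
      · rintro ⟨h1, h2, h3⟩; exact ⟨h1, h3⟩
    rw [e1, ← lintegral_const_mul'' _ (ha.indicator measurableSet_Ioi)]
    refine lintegral_congr fun s => ?_
    by_cases h : t < s <;> simp [indicator, h, mul_comm]
  rw [setLIntegral_congr_fun measurableSet_Ioo h1, setLIntegral_congr_fun measurableSet_Ioo h2]
  apply lintegral_lintegral_swap
  refine AEMeasurable.indicator ?_ (measurableSet_lt measurable_snd measurable_fst)
  exact (ha.comp_fst).mul (hb.comp_snd)

lemma lintegral_Ioo_le_of_forall (t : ℝ) (φ : ℝ → ENNReal) (c : ENNReal)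
    (h : ∀ x, t < x → x < 1 → ∫⁻ s in Ioo t x, φ s ≤ c) : ∫⁻ s in Ioo t 1, φ s ≤ c := by
  have e : Ioo t 1 = ⋃ n : ℕ, Ioo t (1 - 1 / ((n:ℝ) + 1)) := by
    ext x
    simp only [mem_iUnion, mem_Ioo]
    constructor
    · rintro ⟨h1, h2⟩
      obtain ⟨n, hn⟩ := exists_nat_one_div_lt (sub_pos.2 h2)
      exact ⟨n, h1, by linarith⟩
    · rintro ⟨n, h1, h2⟩
      have : 0 < 1 / ((n:ℝ) + 1) := by positivity
      exact ⟨h1, by linarith⟩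
  have hmono : Monotone fun n : ℕ => Ioo t (1 - 1 / ((n:ℝ) + 1)) := by
    intro n m hnm
    apply Ioo_subset_Ioo le_rfl
    have : 1 / ((m:ℝ) + 1) ≤ 1 / ((n:ℝ) + 1) := Nat.one_div_le_one_div hnm
    linarith
  rw [e, setLIntegral_iUnion_of_directed _ hmono.directed_le]
  refine iSup_le fun n => ?_
  by_cases hn : t < 1 - 1 / ((n:ℝ) + 1)
  · exact h _ hn (by have : 0 < 1 / ((n:ℝ) + 1) := by positivity
                     linarith)
  · rw [Ioo_eq_empty hn]; simp

lemma prim_deriv (u : ℝ → ℝ) (hu : ContinuousOn u (Ico 0 1)) (x : ℝ) (hx : x ∈ Ioo (0:ℝ) 1) :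
    HasDerivAt (fun t => ∫ s in (0:ℝ)..t, u s) (u x) x := by
  have hca : ContinuousAt u x := hu.continuousAt (Ico_mem_nhds hx.1 hx.2)
  apply intervalIntegral.integral_hasDerivAt_right
  · apply ContinuousOn.intervalIntegrable
    rw [uIcc_of_le hx.1.le]
    exact hu.mono fun y hy => ⟨hy.1, hy.2.trans_lt hx.2⟩
  · exact ContinuousOn.stronglyMeasurableAtFilter isOpen_Ioo (hu.mono Ioo_subset_Ico_self) x hx
  · exact hca

lemma prim_cont (u : ℝ → ℝ) (hu : ContinuousOn u (Ico 0 1)) (x : ℝ) (hx : x ∈ Ioo (0:ℝ) 1) :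
    ContinuousOn (fun t => ∫ s in (0:ℝ)..t, u s) (Icc 0 x) := by
  have h := intervalIntegral.continuousOn_primitive_interval (f := u) (a := 0) (b := x)
    (μ := volume) (by
      rw [uIcc_of_le hx.1.le]
      exact (hu.mono fun y hy => ⟨hy.1, hy.2.trans_lt hx.2⟩).integrableOn_Icc)
  rwa [uIcc_of_le hx.1.le] at h

/-- weighted Cauchy-Schwarz -/
lemma cs_sq (μ : Measure ℝ) (g p q : ℝ → ENNReal) (hg : AEMeasurable g μ) (hp : AEMeasurable p μ)
    (hq : AEMeasurable q μ) (hpq : ∀ᵐ t ∂μ, p t * q t = 1) :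
    (∫⁻ t, g t ∂μ) ^ 2 ≤ (∫⁻ t, g t ^ 2 * p t ∂μ) * ∫⁻ t, q t ∂μ := by
  have h := ENNReal.lintegral_mul_le_Lp_mul_Lq μ Real.HolderConjugate.two_two
    (f := fun t => g t * p t ^ (1/2:ℝ)) (g := fun t => q t ^ (1/2:ℝ))
    (hg.mul (hp.pow_const _)) (hq.pow_const _)
  have e : ∫⁻ t, g t ∂μ = ∫⁻ t, ((fun t => g t * p t ^ (1/2:ℝ)) * fun t => q t ^ (1/2:ℝ)) t ∂μ := by
    refine lintegral_congr_ae ?_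
    filter_upwards [hpq] with t ht
    simp only [Pi.mul_apply]
    rw [mul_assoc, ← ENNReal.mul_rpow_of_nonneg _ _ (by norm_num), ht]
    simp
  rw [← e] at h
  have hsq : ∀ x : ENNReal, (x ^ (1/2:ℝ)) ^ (2:ℕ) = x := by
    intro x
    rw [← ENNReal.rpow_natCast, ← ENNReal.rpow_mul]; norm_num
  calc _ ≤ _ := pow_le_pow_left' h 2
    _ = _ := by
      rw [mul_pow, hsq, hsq]
      congr 1
      · refine lintegral_congr fun t => ?_
        rw [ENNReal.rpow_two, mul_pow, hsq]
      · refine lintegral_congr fun t => ?_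
        rw [ENNReal.rpow_two, hsq]

lemma lint_ftc (Φ ψ : ℝ → ℝ) (a b : ℝ) (hab : a ≤ b) (hΦ : ContinuousOn Φ (Icc a b))
    (hd : ∀ x ∈ Ioo a b, HasDerivAt Φ (ψ x) x) (hψ : ContinuousOn ψ (Icc a b))
    (hpos : ∀ x ∈ Ioo a b, 0 ≤ ψ x) :
    ∫⁻ x in Ioo a b, ENNReal.ofReal (ψ x) = ENNReal.ofReal (Φ b - Φ a) := by
  have hint : IntervalIntegrable ψ volume a b := by
    apply ContinuousOn.intervalIntegrable; rwa [uIcc_of_le hab]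
  rw [← intervalIntegral.integral_eq_sub_of_hasDerivAt_of_le hab hΦ hd hint,
    intervalIntegral.integral_of_le hab, integral_Ioc_eq_integral_Ioo,
    ofReal_integral_eq_lintegral_ofReal]
  · exact hψ.integrableOn_Icc.mono_set Ioo_subset_Icc_self
  · exact (ae_restrict_mem measurableSet_Ioo).mono hpos

lemma hardy (u w : ℝ → ℝ) (hu : ContinuousOn u (Ico 0 1)) (hw : ContinuousOn w (Ico 0 1))
    (hu0 : ∀ x ∈ Ico (0:ℝ) 1, 0 < u x) (hw0 : ∀ x ∈ Ico (0:ℝ) 1, 0 < w x)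
    (hwi : IntegrableOn w (Ioo 0 1)) (B : ℝ) (hB0 : 0 ≤ B)
    (hB : ∀ r ∈ Ioo (0:ℝ) 1, (1 + ∫ s in (0:ℝ)..r, u s) * (∫ s in r..1, w s) ≤ B)
    (g : ℝ → ENNReal) (hg : Measurable g) :
    ∫⁻ s in Ioo (0:ℝ) 1, ENNReal.ofReal (w s) * (∫⁻ t in Ioo 0 s, g t) ^ 2 ≤
      ENNReal.ofReal (4 * B) * ∫⁻ t in Ioo (0:ℝ) 1, g t ^ 2 * ENNReal.ofReal (1 / u t) := by
  have hsub : ∀ x : ℝ, x < 1 → Icc (0:ℝ) x ⊆ Ico 0 1 := fun x hx y hy => ⟨hy.1, hy.2.trans_lt hx⟩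
  set H : ℝ → ℝ := fun t => 1 + ∫ s in (0:ℝ)..t, u s with hH
  set T : ℝ → ℝ := fun t => (∫ s in (0:ℝ)..1, w s) - ∫ s in (0:ℝ)..t, w s with hT
  have hw01 : IntervalIntegrable w volume 0 1 := by
    rw [intervalIntegrable_iff_integrableOn_Ioo_of_le zero_le_one]; exact hwi
  have hT' : ∀ t ∈ Ico (0:ℝ) 1, T t = ∫ s in t..1, w s := by
    intro t ht
    simp only [hT]
    have i1 : IntervalIntegrable w volume 0 t := hw01.mono_set (by
      rw [uIcc_of_le ht.1, uIcc_of_le zero_le_one]; exact Icc_subset_Icc le_rfl ht.2.le)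
    have i2 : IntervalIntegrable w volume t 1 := hw01.mono_set (by
      rw [uIcc_of_le ht.2.le, uIcc_of_le zero_le_one]; exact Icc_subset_Icc ht.1 le_rfl)
    rw [← intervalIntegral.integral_add_adjacent_intervals i1 i2]; ring
  have hTpos : ∀ t ∈ Ico (0:ℝ) 1, 0 < T t := by
    intro t ht
    rw [hT' t ht]
    apply intervalIntegral.intervalIntegral_pos_of_pos_on _ _ ht.2
    · exact hw01.mono_set (by
        rw [uIcc_of_le ht.2.le, uIcc_of_le zero_le_one]; exact Icc_subset_Icc ht.1 le_rfl)
    · intro x hx; exact hw0 x ⟨ht.1.trans hx.1.le, hx.2⟩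
  have hHpos : ∀ t ∈ Ico (0:ℝ) 1, 1 ≤ H t := by
    intro t ht
    have : 0 ≤ ∫ s in (0:ℝ)..t, u s :=
      intervalIntegral.integral_nonneg ht.1 fun x hx => (hu0 x ⟨hx.1, hx.2.trans_lt ht.2⟩).le
    simp only [hH]; linarith
  have hHd : ∀ x ∈ Ioo (0:ℝ) 1, HasDerivAt H (u x) x := fun x hx =>
    (prim_deriv u hu x hx).const_add 1
  have hTd : ∀ x ∈ Ioo (0:ℝ) 1, HasDerivAt T (-w x) x := fun x hx =>
    (prim_deriv w hw x hx).const_sub _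
  have hHc : ∀ x ∈ Ioo (0:ℝ) 1, ContinuousOn H (Icc 0 x) := fun x hx =>
    continuousOn_const.add (prim_cont u hu x hx)
  have hTc : ∀ x ∈ Ioo (0:ℝ) 1, ContinuousOn T (Icc 0 x) := fun x hx =>
    continuousOn_const.sub (prim_cont w hw x hx)
  have hHT : ∀ t ∈ Ioo (0:ℝ) 1, H t * T t ≤ B := fun t ht => by
    rw [hT' t ⟨ht.1.le, ht.2⟩]; exact hB t ht
  -- step 1
  have step1 : ∀ s ∈ Ioo (0:ℝ) 1, ∫⁻ t in Ioo 0 s, ENNReal.ofReal (u t / √(H t)) ≤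
      ENNReal.ofReal (2 * √(H s)) := by
    intro s hs
    have hp : ∀ x ∈ Icc 0 s, 0 < H x := fun x hx => by linarith [hHpos x (hsub s hs.2 hx)]
    rw [lint_ftc (fun t => 2 * √(H t)) (fun t => u t / √(H t)) 0 s hs.1.le]
    · apply ENNReal.ofReal_le_ofReal
      have := Real.sqrt_nonneg (H 0)
      linarith
    · exact continuousOn_const.mul (hHc s hs).sqrt
    · intro x hx
      have := ((hHd x ⟨hx.1, hx.2.trans hs.2⟩).sqrt (hp x ⟨hx.1.le, hx.2.le⟩).ne').const_mul 2
      refine this.congr_deriv ?_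
      have : √(H x) ≠ 0 := (Real.sqrt_pos.2 (hp x ⟨hx.1.le, hx.2.le⟩)).ne'
      field_simp
    · exact (hu.mono (hsub s hs.2)).div (hHc s hs).sqrt
        fun x hx => (Real.sqrt_pos.2 (hp x hx)).ne'
    · intro x hx
      exact div_nonneg (hu0 x ⟨hx.1.le, hx.2.trans hs.2⟩).le (Real.sqrt_nonneg _)
  -- step 2
  have step2 : ∀ t ∈ Ioo (0:ℝ) 1, ∫⁻ s in Ioo t 1, ENNReal.ofReal (w s * (2 * √(H s))) ≤
      ENNReal.ofReal (4 * B / √(H t)) := by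
    intro t ht
    have hHt : 0 < √(H t) := Real.sqrt_pos.2 (by linarith [hHpos t ⟨ht.1.le, ht.2⟩])
    apply lintegral_Ioo_le_of_forall
    intro x htx hx1
    have hp : ∀ y ∈ Icc t x, 0 < T y := fun y hy => hTpos y ⟨ht.1.le.trans hy.1, hy.2.trans_lt hx1⟩
    have hTcx : ContinuousOn T (Icc t x) :=
      (hTc x ⟨ht.1.trans htx, hx1⟩).mono (Icc_subset_Icc ht.1.le le_rfl)
    have key : ∫⁻ s in Ioo t x, ENNReal.ofReal (w s / √(T s)) ≤ ENNReal.ofReal (2 * √(T t)) := by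
      rw [lint_ftc (fun s => -(2 * √(T s))) (fun s => w s / √(T s)) t x htx.le]
      · apply ENNReal.ofReal_le_ofReal
        have := Real.sqrt_nonneg (T x)
        linarith
      · exact (continuousOn_const.mul hTcx.sqrt).neg
      · intro y hy
        have hy' : y ∈ Icc t x := ⟨hy.1.le, hy.2.le⟩
        have := (((hTd y ⟨ht.1.trans hy.1, hy.2.trans hx1⟩).sqrt (hp y hy').ne').const_mul 2).neg
        refine this.congr_deriv ?_
        have : √(T y) ≠ 0 := (Real.sqrt_pos.2 (hp y hy')).ne'
        field_simp
      · exact (hw.mono fun y hy => ⟨ht.1.le.trans hy.1, hy.2.trans_lt hx1⟩).div hTcx.sqrt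
          fun y hy => (Real.sqrt_pos.2 (hp y hy)).ne'
      · intro y hy
        exact div_nonneg (hw0 y ⟨(ht.1.trans hy.1).le, hy.2.trans hx1⟩).le (Real.sqrt_nonneg _)
    calc ∫⁻ s in Ioo t x, ENNReal.ofReal (w s * (2 * √(H s)))
        ≤ ∫⁻ s in Ioo t x, ENNReal.ofReal (2 * √B) * ENNReal.ofReal (w s / √(T s)) := by
          apply setLIntegral_mono' measurableSet_Ioo
          intro y hy
          rw [← ENNReal.ofReal_mul (by positivity)]
          apply ENNReal.ofReal_le_ofReal
          have hy1 : y ∈ Ioo (0:ℝ) 1 := ⟨ht.1.trans hy.1, hy.2.trans hx1⟩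
          have hTy := Real.sqrt_pos.2 (hp y ⟨hy.1.le, hy.2.le⟩)
          have : √(H y) * √(T y) ≤ √B := by
            rw [← Real.sqrt_mul (by linarith [hHpos y ⟨hy1.1.le, hy1.2⟩])]
            exact Real.sqrt_le_sqrt (hHT y hy1)
          have hle : √(H y) ≤ √B / √(T y) := by rwa [le_div_iff₀ hTy]
          calc w y * (2 * √(H y)) ≤ w y * (2 * (√B / √(T y))) := by
                have := (hw0 y ⟨hy1.1.le, hy1.2⟩).le
                gcongr
            _ = _ := by ring
      _ = ENNReal.ofReal (2 * √B) * ∫⁻ s in Ioo t x, ENNReal.ofReal (w s / √(T s)) := by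
          rw [lintegral_const_mul' _ _ ENNReal.ofReal_ne_top]
      _ ≤ ENNReal.ofReal (2 * √B) * ENNReal.ofReal (2 * √(T t)) := by gcongr
      _ ≤ _ := by
          rw [← ENNReal.ofReal_mul (by positivity)]
          apply ENNReal.ofReal_le_ofReal
          rw [le_div_iff₀ hHt]
          have : √(H t) * √(T t) ≤ √B := by
            rw [← Real.sqrt_mul (by linarith [hHpos t ⟨ht.1.le, ht.2⟩])]
            exact Real.sqrt_le_sqrt (hHT t ht)
          calc 2 * √B * (2 * √(T t)) * √(H t) = 4 * √B * (√(H t) * √(T t)) := by ring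
            _ ≤ 4 * √B * √B := by gcongr
            _ = 4 * B := by rw [mul_assoc, Real.mul_self_sqrt hB0]
  -- measurability
  have hHco : ContinuousOn H (Ioo 0 1) := fun x hx => (hHd x hx).continuousAt.continuousWithinAt
  have huo := hu.mono Ioo_subset_Ico_self
  have hwo := hw.mono Ioo_subset_Ico_self
  have hsq0 : ∀ t ∈ Ioo (0:ℝ) 1, 0 < √(H t) := fun t ht =>
    Real.sqrt_pos.2 (by linarith [hHpos t ⟨ht.1.le, ht.2⟩])
  have mp : AEMeasurable (fun t => ENNReal.ofReal (√(H t) / u t)) (volume.restrict (Ioo (0:ℝ) 1)) :=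
    ((hHco.sqrt.div huo fun x hx => (hu0 x ⟨hx.1.le, hx.2⟩).ne').aemeasurable
      measurableSet_Ioo).ennreal_ofReal
  have mq : AEMeasurable (fun t => ENNReal.ofReal (u t / √(H t))) (volume.restrict (Ioo (0:ℝ) 1)) :=
    ((huo.div hHco.sqrt fun x hx => (hsq0 x hx).ne').aemeasurable
      measurableSet_Ioo).ennreal_ofReal
  have ma : AEMeasurable (fun s => ENNReal.ofReal (w s * (2 * √(H s))))
      (volume.restrict (Ioo (0:ℝ) 1)) :=
    ((hwo.mul (continuousOn_const.mul hHco.sqrt)).aemeasurable measurableSet_Ioo).ennreal_ofReal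
  have mb : AEMeasurable (fun t => g t ^ 2 * ENNReal.ofReal (√(H t) / u t))
      (volume.restrict (Ioo (0:ℝ) 1)) := (hg.pow_const 2).aemeasurable.mul mp
  calc ∫⁻ s in Ioo (0:ℝ) 1, ENNReal.ofReal (w s) * (∫⁻ t in Ioo 0 s, g t) ^ 2
      ≤ ∫⁻ s in Ioo (0:ℝ) 1, ENNReal.ofReal (w s * (2 * √(H s))) *
          ∫⁻ t in Ioo 0 s, g t ^ 2 * ENNReal.ofReal (√(H t) / u t) := by
        apply setLIntegral_mono' measurableSet_Ioo
        intro s hs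
        have hsub' : volume.restrict (Ioo 0 s) ≤ volume.restrict (Ioo (0:ℝ) 1) :=
          Measure.restrict_mono (Ioo_subset_Ioo le_rfl hs.2.le) le_rfl
        have := cs_sq (volume.restrict (Ioo 0 s)) g _ _ hg.aemeasurable (mp.mono_measure hsub')
          (mq.mono_measure hsub') (by
            filter_upwards [ae_restrict_mem measurableSet_Ioo] with t ht
            have ht1 : t ∈ Ioo (0:ℝ) 1 := ⟨ht.1, ht.2.trans hs.2⟩
            have h1 := hsq0 t ht1
            have h2 := hu0 t ⟨ht1.1.le, ht1.2⟩
            rw [← ENNReal.ofReal_mul (by positivity)]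
            rw [show √(H t) / u t * (u t / √(H t)) = 1 by field_simp]
            simp)
        rw [ENNReal.ofReal_mul (hw0 s ⟨hs.1.le, hs.2⟩).le, mul_assoc]
        gcongr
        refine this.trans ?_
        rw [mul_comm]
        gcongr
        exact step1 s hs
    _ = ∫⁻ t in Ioo (0:ℝ) 1, (g t ^ 2 * ENNReal.ofReal (√(H t) / u t)) *
          ∫⁻ s in Ioo t 1, ENNReal.ofReal (w s * (2 * √(H s))) := tonelli_triangle _ _ ma mb
    _ ≤ ∫⁻ t in Ioo (0:ℝ) 1, ENNReal.ofReal (4 * B) * (g t ^ 2 * ENNReal.ofReal (1 / u t)) := by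
        apply setLIntegral_mono' measurableSet_Ioo
        intro t ht
        have h1 := hsq0 t ht
        have h2 := hu0 t ⟨ht.1.le, ht.2⟩
        calc _ ≤ (g t ^ 2 * ENNReal.ofReal (√(H t) / u t)) * ENNReal.ofReal (4 * B / √(H t)) := by
              gcongr; exact step2 t ht
          _ = _ := by
              rw [mul_assoc, ← ENNReal.ofReal_mul (by positivity), mul_left_comm,
                ← ENNReal.ofReal_mul (by positivity)]
              congr 2
              field_simp
    _ = _ := lintegral_const_mul' _ _ ENNReal.ofReal_ne_top

lemma polar_le (F : ℂ → ENNReal) (hF : Measurable F) :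
    ∫⁻ r in Ioo (0:ℝ) 1, ENNReal.ofReal r * ∫⁻ θ in Ioo (-π) π, F (circleMap 0 r θ) ≤
      ∫⁻ z in Metric.ball (0:ℂ) 1, F z := by
  rw [← lintegral_indicator Metric.isOpen_ball.measurableSet,
    ← Complex.lintegral_comp_polarCoord_symm, polarCoord_target, Measure.volume_eq_prod,
    ← Measure.prod_restrict]
  have hm : Measurable fun p : ℝ × ℝ => circleMap 0 p.1 p.2 := by
    unfold circleMap
    fun_prop
  have e : ∀ p : ℝ × ℝ, Complex.polarCoord.symm p = circleMap 0 p.1 p.2 := by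
    intro p
    rw [Complex.polarCoord_symm_apply, circleMap_zero, Complex.exp_mul_I]
    push_cast; rfl
  simp_rw [e, smul_eq_mul]
  have hF2 : Measurable ((Metric.ball (0:ℂ) 1).indicator F) :=
    hF.indicator Metric.isOpen_ball.measurableSet
  rw [lintegral_prod _ (by
    exact ((measurable_fst.ennreal_ofReal).mul (hF2.comp hm)).aemeasurable)]
  refine le_trans ?_ (lintegral_mono_set (Ioo_subset_Ioi_self : Ioo (0:ℝ) 1 ⊆ Ioi 0))
  apply setLIntegral_mono' measurableSet_Ioo
  intro r hr
  rw [← lintegral_const_mul' _ _ ENNReal.ofReal_ne_top]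
  apply lintegral_mono
  intro θ
  have : circleMap 0 r θ ∈ Metric.ball (0:ℂ) 1 := by simp [abs_of_pos hr.1, hr.2]
  simp [indicator_of_mem this]

lemma hatw_lintegral (v : ℝ → ℝ) (hv : RadialWeight v) (t : ℝ) (ht : t ∈ Ico (0:ℝ) 1) :
    ENNReal.ofReal (hatw v t) = ∫⁻ s in Ioo t 1, ENNReal.ofReal (v s) := by
  obtain ⟨h1, h2, h3⟩ := hv
  rw [hatw, intervalIntegral.integral_of_le ht.2.le, integral_Ioc_eq_integral_Ioo,
    ofReal_integral_eq_lintegral_ofReal]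
  · exact h3.mono_set (Ioo_subset_Ioo ht.1 le_rfl)
  · filter_upwards [ae_restrict_mem measurableSet_Ioo] with s hs
    exact (h2 s ⟨ht.1.trans hs.1.le, hs.2⟩).le

lemma dirichlet_lower (v : ℝ → ℝ) (hv : RadialWeight v) (f : ℂ → ℂ)
    (hf : DifferentiableOn ℂ f (Metric.ball 0 1)) :
    ∫⁻ t in Ioo (0:ℝ) 1, (∑' n, (‖gcoef (deriv f) n‖₊ : ENNReal) * ENNReal.ofReal (t ^ n)) ^ 2 *
      ENNReal.ofReal (hatw v t) ≤ 8 * DvSq v f := by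
  set G : ℝ → ENNReal := fun t => ∑' n, (‖gcoef (deriv f) n‖₊ : ENNReal) * ENNReal.ofReal (t ^ n)
    with hG
  have hGm : Measurable G := by
    apply Measurable.tsum
    intro n; fun_prop
  have hd : DifferentiableOn ℂ (deriv f) (Metric.ball 0 1) := hf.deriv Metric.isOpen_ball
  have hvm := hv.1
  have e : ∀ t ∈ Ioo (0:ℝ) 1, G t ^ 2 * ENNReal.ofReal (hatw v t) =
      G t ^ 2 * ∫⁻ s in Ioo t 1, ENNReal.ofReal (v s) := fun t ht => by
    rw [hatw_lintegral v hv t ⟨ht.1.le, ht.2⟩]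
  rw [setLIntegral_congr_fun measurableSet_Ioo e, ← tonelli_triangle (fun s => ENNReal.ofReal (v s))
    (fun t => G t ^ 2) hvm.ennreal_ofReal.aemeasurable (hGm.pow_const 2).aemeasurable]
  have hpi : (ENNReal.ofReal (2 * π))⁻¹ ≤ (ENNReal.ofReal π)⁻¹ := by
    apply ENNReal.inv_le_inv.2
    apply ENNReal.ofReal_le_ofReal
    linarith [Real.pi_pos]
  have hpt : (ENNReal.ofReal π)⁻¹ ≠ ⊤ := by
    simp [Real.pi_pos]
  set F : ℂ → ENNReal := fun z => (‖deriv f z‖₊ : ENNReal)^2 * ENNReal.ofReal (v ‖z‖) with hFdef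
  have hFm : Measurable F := by
    have := measurable_deriv f
    have h2 : Measurable fun z : ℂ => v ‖z‖ := hvm.comp measurable_norm
    exact ((measurable_coe_nnreal_ennreal.comp this.nnnorm).pow_const 2).mul h2.ennreal_ofReal
  have h8 : (8 : ENNReal) ≠ ⊤ := by simp
  calc ∫⁻ s in Ioo (0:ℝ) 1, ENNReal.ofReal (v s) * ∫⁻ t in Ioo 0 s, G t ^ 2
      ≤ ∫⁻ s in Ioo (0:ℝ) 1, 8 * ((ENNReal.ofReal π)⁻¹ *
          (ENNReal.ofReal s * ∫⁻ θ in Ioo (-π) π, F (circleMap 0 s θ))) := by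
        apply setLIntegral_mono' measurableSet_Ioo
        intro s hs
        have h1 := fejer_riesz (fun n => (‖gcoef (deriv f) n‖₊ : ENNReal)) s hs.1.le
        have h2 := bessel_circle (deriv f) hd s hs
        have h3 : ∫⁻ θ in Ioo (-π) π, F (circleMap 0 s θ) =
            (∫⁻ θ in Ioo (-π) π, (‖deriv f (circleMap 0 s θ)‖₊ : ENNReal) ^ 2) *
              ENNReal.ofReal (v s) := by
          rw [← lintegral_mul_const' _ _ ENNReal.ofReal_ne_top]
          simp only [hFdef, norm_circleMap_zero, abs_of_pos hs.1]
        rw [h3]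
        calc ENNReal.ofReal (v s) * ∫⁻ t in Ioo 0 s, G t ^ 2
            ≤ ENNReal.ofReal (v s) * (8 * (ENNReal.ofReal s * ((ENNReal.ofReal π)⁻¹ *
              ∫⁻ θ in Ioo (-π) π, (‖deriv f (circleMap 0 s θ)‖₊ : ENNReal) ^ 2))) := by
              gcongr
              refine h1.trans ?_
              gcongr
              refine h2.trans ?_
              gcongr
          _ = _ := by ring
    _ = 8 * ((ENNReal.ofReal π)⁻¹ * ∫⁻ s in Ioo (0:ℝ) 1,
          (ENNReal.ofReal s * ∫⁻ θ in Ioo (-π) π, F (circleMap 0 s θ))) := by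
        rw [lintegral_const_mul' _ _ h8, lintegral_const_mul' _ _ hpt]
    _ ≤ 8 * ((ENNReal.ofReal π)⁻¹ * ∫⁻ z in Metric.ball (0:ℂ) 1, F z) := by
        gcongr; exact polar_le F hFm
    _ ≤ 8 * DvSq v f := by
        gcongr
        exact le_add_self

lemma ennreal_add_sq_le (a b : ENNReal) : (a + b) ^ 2 ≤ 2 * a ^ 2 + 2 * b ^ 2 := by
  calc (a + b) ^ 2 = a ^ 2 + b ^ 2 + 2 * (a * b) := by ring
    _ ≤ a ^ 2 + b ^ 2 + (a ^ 2 + b ^ 2) := by gcongr; exact ennreal_two_mul_le a b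
    _ = _ := by ring

lemma hatw_pos (v : ℝ → ℝ) (hv : RadialWeight v) (t : ℝ) (ht : t ∈ Ico (0:ℝ) 1) :
    0 < hatw v t := by
  obtain ⟨h1, h2, h3⟩ := hv
  have h01 : IntervalIntegrable v volume 0 1 := by
    rw [intervalIntegrable_iff_integrableOn_Ioo_of_le zero_le_one]; exact h3
  apply intervalIntegral.intervalIntegral_pos_of_pos_on _ _ ht.2
  · exact h01.mono_set (by
      rw [uIcc_of_le ht.2.le, uIcc_of_le zero_le_one]; exact Icc_subset_Icc ht.1 le_rfl)
  · intro x hx; exact h2 x ⟨ht.1.trans hx.1.le, hx.2⟩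

lemma hatw_cont (v : ℝ → ℝ) (hv : RadialWeight v) : ContinuousOn (hatw v) (Ico 0 1) := by
  obtain ⟨h1, h2, h3⟩ := hv
  have h := intervalIntegral.continuousOn_primitive_interval_left (f := v) (a := 0) (b := 1)
    (μ := volume) (by
      rw [uIcc_of_le zero_le_one]
      rw [integrableOn_Icc_iff_integrableOn_Ioo]; exact h3)
  rw [uIcc_of_le zero_le_one] at h
  exact h.mono Ico_subset_Icc_self

lemma M1_prod (v : ℝ → ℝ) (r : ℝ) (hr : r ∈ Ioo (0:ℝ) 1) :
    (∫⁻ s in Ioo r 1, ENNReal.ofReal (hatw v s / (1-s)^2)) *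
    (∫⁻ s in Ioo (0:ℝ) r, ENNReal.ofReal (1 / hatw v s)) ≤ M1v v ^ 2 := by
  have h : (∫⁻ s in Ioo r 1, ENNReal.ofReal (hatw v s / (1-s)^2)) ^ (1/2 : ℝ) *
    (∫⁻ s in Ioo (0:ℝ) r, ENNReal.ofReal (1 / hatw v s)) ^ (1/2 : ℝ) ≤ M1v v := by
    unfold M1v
    exact le_iSup₂ (f := fun r (_ : r ∈ Ioo (0:ℝ) 1) =>
      (∫⁻ s in Ioo r 1, ENNReal.ofReal (hatw v s / (1-s)^2)) ^ (1/2 : ℝ) *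
      (∫⁻ s in Ioo (0:ℝ) r, ENNReal.ofReal (1 / hatw v s)) ^ (1/2 : ℝ)) r hr
  have hsq : ∀ x : ENNReal, (x ^ (1/2:ℝ)) ^ (2:ℕ) = x := by
    intro x
    rw [← ENNReal.rpow_natCast, ← ENNReal.rpow_mul]; norm_num
  have := pow_le_pow_left' h 2
  rwa [mul_pow, hsq, hsq] at this

lemma lint_pos (φ : ℝ → ℝ) (a b : ℝ) (hab : a < b) (hc : ContinuousOn φ (Ioo a b))
    (hp : ∀ x ∈ Ioo a b, 0 < φ x) : 0 < ∫⁻ s in Ioo a b, ENNReal.ofReal (φ s) := by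
  rw [pos_iff_ne_zero]
  intro h0
  rw [lintegral_eq_zero_iff' (hc.aemeasurable measurableSet_Ioo).ennreal_ofReal] at h0
  have h1 : ∀ᵐ x ∂(volume.restrict (Ioo a b)), False := by
    filter_upwards [h0, ae_restrict_mem measurableSet_Ioo] with x hx hx2
    have := ENNReal.ofReal_pos.2 (hp x hx2)
    rw [hx] at this
    exact lt_irrefl _ this
  rw [Filter.eventually_false_iff_eq_bot, ae_eq_bot, Measure.restrict_eq_zero, Real.volume_Ioo] at h1
  simp at h1
  linarith

lemma main_bound (v : ℝ → ℝ) (hv : RadialWeight v) (hM1 : M1v v < ⊤) :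
    M1v v ^ 2 ≠ 0 ∧ ∃ K : ENNReal, K ≠ ⊤ ∧ ∀ f : ℂ → ℂ, DifferentiableOn ℂ f (Metric.ball 0 1) →
      ∫⁻ s in Set.Ioo (0:ℝ) 1, ENNReal.ofReal (Minf f s ^ 2 * hatw v s / (1-s)^2) ≤
        K * DvSq v f := by
  set u : ℝ → ℝ := fun s => 1 / hatw v s with hu
  set w : ℝ → ℝ := fun s => hatw v s / (1-s)^2 with hw
  have hVc := hatw_cont v hv
  have hVp := hatw_pos v hv
  have huc : ContinuousOn u (Ico 0 1) := continuousOn_const.div hVc fun x hx => (hVp x hx).ne'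
  have hwc : ContinuousOn w (Ico 0 1) := hVc.div (by fun_prop) fun x hx => by
    have : 0 < 1 - x := by linarith [hx.2]
    positivity
  have hup : ∀ x ∈ Ico (0:ℝ) 1, 0 < u x := fun x hx => one_div_pos.2 (hVp x hx)
  have hwp : ∀ x ∈ Ico (0:ℝ) 1, 0 < w x := fun x hx => by
    have : 0 < 1 - x := by linarith [hx.2]
    exact div_pos (hVp x hx) (by positivity)
  have hM2 : M1v v ^ 2 ≠ ⊤ := ENNReal.pow_ne_top hM1.ne
  have hhalf : (1/2:ℝ) ∈ Ioo (0:ℝ) 1 := by constructor <;> norm_num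
  have hprod : ∀ r ∈ Ioo (0:ℝ) 1, (∫⁻ s in Ioo r 1, ENNReal.ofReal (w s)) *
    (∫⁻ s in Ioo (0:ℝ) r, ENNReal.ofReal (u s)) ≤ M1v v ^ 2 := M1_prod v
  have pu : 0 < ∫⁻ s in Ioo (0:ℝ) (1/2), ENNReal.ofReal (u s) :=
    lint_pos u 0 (1/2) hhalf.1 (huc.mono fun x hx => ⟨hx.1.le, hx.2.trans hhalf.2⟩)
      fun x hx => hup x ⟨hx.1.le, hx.2.trans hhalf.2⟩
  have pw : 0 < ∫⁻ s in Ioo (1/2:ℝ) 1, ENNReal.ofReal (w s) :=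
    lint_pos w (1/2) 1 hhalf.2 (hwc.mono fun x hx => ⟨(hhalf.1.trans hx.1).le, hx.2⟩)
      fun x hx => hwp x ⟨(hhalf.1.trans hx.1).le, hx.2⟩
  have hne : M1v v ^ 2 ≠ 0 := by
    intro h0
    have := hprod _ hhalf
    rw [h0] at this
    exact absurd this (not_le.2 (ENNReal.mul_pos pw.ne' pu.ne'))
  refine ⟨hne, ?_⟩
  have hwi2 : ∫⁻ s in Ioo (1/2:ℝ) 1, ENNReal.ofReal (w s) ≠ ⊤ := by
    intro htop
    have := hprod _ hhalf
    rw [htop, ENNReal.top_mul pu.ne'] at this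
    exact hM2 (top_le_iff.1 this)
  have wm : ∀ a b : ℝ, 0 ≤ a → b ≤ 1 →
      AEStronglyMeasurable w (volume.restrict (Ioo a b)) := fun a b ha hb =>
    (hwc.mono fun x hx => ⟨ha.trans hx.1.le, hx.2.trans_le hb⟩).aestronglyMeasurable
      measurableSet_Ioo
  have hwI : IntegrableOn w (Ioo 0 1) := by
    have i1 : IntegrableOn w (Icc 0 (1/2)) :=
      (hwc.mono fun x hx => ⟨hx.1, hx.2.trans_lt hhalf.2⟩).integrableOn_Icc
    have i2 : IntegrableOn w (Ioo (1/2) 1) := by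
      refine ⟨wm _ _ hhalf.1.le le_rfl, ?_⟩
      rw [hasFiniteIntegral_iff_ofReal]
      · exact lt_top_iff_ne_top.2 hwi2
      · filter_upwards [ae_restrict_mem measurableSet_Ioo] with x hx
        exact (hwp x ⟨(hhalf.1.trans hx.1).le, hx.2⟩).le
    refine (i1.union i2).mono_set fun x hx => ?_
    rcases le_or_gt x (1/2) with h | h
    · exact Or.inl ⟨hx.1.le, h⟩
    · exact Or.inr ⟨h, hx.2⟩
  have hw01 : IntervalIntegrable w volume 0 1 := by
    rw [intervalIntegrable_iff_integrableOn_Ioo_of_le zero_le_one]; exact hwI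
  set T0 : ℝ := ∫ s in (0:ℝ)..1, w s with hT0
  have hT0nn : 0 ≤ T0 := by
    rw [hT0, intervalIntegral.integral_of_le zero_le_one, integral_Ioc_eq_integral_Ioo]
    exact setIntegral_nonneg measurableSet_Ioo fun x hx => (hwp x ⟨hx.1.le, hx.2⟩).le
  have hT0e : ∫⁻ s in Ioo (0:ℝ) 1, ENNReal.ofReal (w s) = ENNReal.ofReal T0 := by
    rw [hT0, intervalIntegral.integral_of_le zero_le_one, integral_Ioc_eq_integral_Ioo,
      ofReal_integral_eq_lintegral_ofReal hwI]
    filter_upwards [ae_restrict_mem measurableSet_Ioo] with x hx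
    exact (hwp x ⟨hx.1.le, hx.2⟩).le
  set B : ℝ := T0 + (M1v v ^ 2).toReal with hBdef
  have hB0 : 0 ≤ B := add_nonneg hT0nn ENNReal.toReal_nonneg
  have hB : ∀ r ∈ Ioo (0:ℝ) 1, (1 + ∫ s in (0:ℝ)..r, u s) * (∫ s in r..1, w s) ≤ B := by
    intro r hr
    have i1 : IntervalIntegrable w volume 0 r := hw01.mono_set (by
      rw [uIcc_of_le hr.1.le, uIcc_of_le zero_le_one]; exact Icc_subset_Icc le_rfl hr.2.le)
    have i2 : IntervalIntegrable w volume r 1 := hw01.mono_set (by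
      rw [uIcc_of_le hr.2.le, uIcc_of_le zero_le_one]; exact Icc_subset_Icc hr.1.le le_rfl)
    have hadd := intervalIntegral.integral_add_adjacent_intervals i1 i2
    have hnn : 0 ≤ ∫ s in (0:ℝ)..r, w s :=
      intervalIntegral.integral_nonneg hr.1.le fun x hx => (hwp x ⟨hx.1, hx.2.trans_lt hr.2⟩).le
    have e1 : ∫⁻ s in Ioo r 1, ENNReal.ofReal (w s) = ENNReal.ofReal (∫ s in r..1, w s) := by
      rw [intervalIntegral.integral_of_le hr.2.le, integral_Ioc_eq_integral_Ioo,
        ofReal_integral_eq_lintegral_ofReal (hwI.mono_set (Ioo_subset_Ioo hr.1.le le_rfl))]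
      filter_upwards [ae_restrict_mem measurableSet_Ioo] with x hx
      exact (hwp x ⟨(hr.1.trans hx.1).le, hx.2⟩).le
    have e2 : ∫⁻ s in Ioo 0 r, ENNReal.ofReal (u s) = ENNReal.ofReal (∫ s in (0:ℝ)..r, u s) := by
      rw [intervalIntegral.integral_of_le hr.1.le, integral_Ioc_eq_integral_Ioo,
        ofReal_integral_eq_lintegral_ofReal]
      · exact ((huc.mono fun x hx => ⟨hx.1, hx.2.trans_lt hr.2⟩).integrableOn_Icc).mono_set
          Ioo_subset_Icc_self
      filter_upwards [ae_restrict_mem measurableSet_Ioo] with x hx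
      exact (hup x ⟨hx.1.le, hx.2.trans hr.2⟩).le
    have hu0 : 0 ≤ ∫ s in (0:ℝ)..r, u s :=
      intervalIntegral.integral_nonneg hr.1.le fun x hx => (hup x ⟨hx.1, hx.2.trans_lt hr.2⟩).le
    have hp := hprod r hr
    rw [e1, e2, ← ENNReal.ofReal_mul' hu0] at hp
    have hp2 := (ENNReal.ofReal_le_iff_le_toReal hM2).1 hp
    rw [add_mul, one_mul, hBdef, mul_comm (∫ s in (0:ℝ)..r, u s)]
    linarith
  refine ⟨ENNReal.ofReal (2 * T0) + 2 * (ENNReal.ofReal (4 * B) * 8), by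
    simp [ENNReal.mul_eq_top], ?_⟩
  intro f hf
  set G : ℝ → ENNReal := fun t => ∑' n, (‖gcoef (deriv f) n‖₊ : ENNReal) * ENNReal.ofReal (t ^ n)
    with hG
  have hGm : Measurable G := by
    apply Measurable.tsum
    intro n; fun_prop
  have hh := hardy u w huc hwc hup hwp hwI B hB0 hB G hGm
  have hdl := dirichlet_lower v hv f hf
  have hwm : AEMeasurable (fun s => ENNReal.ofReal (w s)) (volume.restrict (Ioo (0:ℝ) 1)) :=
    (wm 0 1 le_rfl le_rfl).aemeasurable.ennreal_ofReal
  have hA : (‖f 0‖₊ : ENNReal) ^ 2 ≤ DvSq v f := le_self_add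
  calc ∫⁻ s in Set.Ioo (0:ℝ) 1, ENNReal.ofReal (Minf f s ^ 2 * hatw v s / (1-s)^2)
      ≤ ∫⁻ s in Ioo (0:ℝ) 1, (ENNReal.ofReal (w s) * (2 * (‖f 0‖₊ : ENNReal) ^ 2) +
          2 * (ENNReal.ofReal (w s) * (∫⁻ t in Ioo 0 s, G t) ^ 2)) := by
        apply setLIntegral_mono' measurableSet_Ioo
        intro s hs
        have hmn : 0 ≤ Minf f s := Real.sSup_nonneg (by
          rintro _ ⟨z, _, rfl⟩; exact norm_nonneg _)
        rw [show Minf f s ^ 2 * hatw v s / (1-s)^2 = w s * Minf f s ^ 2 by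
          simp only [hw]; ring]
        rw [ENNReal.ofReal_mul (hwp s ⟨hs.1.le, hs.2⟩).le, ENNReal.ofReal_pow hmn]
        calc _ ≤ ENNReal.ofReal (w s) * ((‖f 0‖₊ : ENNReal) + ∫⁻ t in Ioo 0 s, G t) ^ 2 := by
              gcongr; exact Minf_le f hf s hs
          _ ≤ ENNReal.ofReal (w s) * (2 * (‖f 0‖₊ : ENNReal) ^ 2 + 2 * (∫⁻ t in Ioo 0 s, G t) ^ 2) := by
              gcongr; exact ennreal_add_sq_le _ _
          _ = _ := by ring
    _ = ENNReal.ofReal T0 * (2 * (‖f 0‖₊ : ENNReal) ^ 2) +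
          2 * ∫⁻ s in Ioo (0:ℝ) 1, (ENNReal.ofReal (w s) * (∫⁻ t in Ioo 0 s, G t) ^ 2) := by
        rw [lintegral_add_left' (hwm.mul_const _), lintegral_mul_const'' _ hwm, hT0e,
          lintegral_const_mul' _ _ (by simp)]
    _ ≤ ENNReal.ofReal T0 * (2 * DvSq v f) +
          2 * (ENNReal.ofReal (4 * B) * (8 * DvSq v f)) := by
        gcongr
        refine hh.trans ?_
        gcongr
        simpa only [hu, one_div_one_div] using hdl
    _ = _ := by
        rw [ENNReal.ofReal_mul (by norm_num : (0:ℝ) ≤ 2)]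
        simp only [ENNReal.ofReal_ofNat]
        ring

/-- Lemma 2.4 (Hardy–Littlewood type inequality): if `M₁(v) < ∞`, then
`∫_0^1 M_∞(s,f)² v̂(s)/(1-s)² ds ≤ C M₁(v)² ‖f‖²_{D_v}`. -/
theorem statement1 (v : ℝ → ℝ) (hv : RadialWeight v) (hM1 : M1v v < ⊤) :
    ∃ C : ℝ, 0 < C ∧ ∀ f : ℂ → ℂ, DifferentiableOn ℂ f (Metric.ball 0 1) →
      ∫⁻ s in Set.Ioo (0:ℝ) 1, ENNReal.ofReal (Minf f s ^ 2 * hatw v s / (1-s)^2) ≤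
        ENNReal.ofReal C * (M1v v)^2 * DvSq v f := by
  obtain ⟨hne, K, hK, h⟩ := main_bound v hv hM1
  have hM2 : M1v v ^ 2 ≠ ⊤ := ENNReal.pow_ne_top hM1.ne
  have hq : K / M1v v ^ 2 ≠ ⊤ := ENNReal.div_ne_top hK hne
  refine ⟨(K / M1v v ^ 2).toReal + 1, by positivity, fun f hf => (h f hf).trans ?_⟩
  gcongr
  calc K = K / M1v v ^ 2 * M1v v ^ 2 := (ENNReal.div_mul_cancel hne hM2).symm
    _ ≤ _ := by
      gcongr
      rw [ENNReal.ofReal_add ENNReal.toReal_nonneg zero_le_one, ENNReal.ofReal_toReal hq]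
      exact le_self_add

end
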